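/- Let K ≥ 2 be an even integer, let G be a finite simple bipartite graph in which every vertex has degree 1 or 2, let M be a matching in G having no augmenting paths of length ≤ 2K+1, and let v and w be two distinct vertices not covered by M. Then there is no vertex u of degree 1 in G with u ∈ ⋃_{l=0}^{K} X_l(v) and u ∈ ⋃_{l=0}^{K} X_l(w). -/

import Mathlib

/-- A vertex `v` is covered by a set `M` of edges if it lies on some edge of `M`. -/
def coveredBy {V : Type*} (M : Set (Sym2 V)) (v : V) : Prop := ∃ e ∈ M, v ∈ e

/-- `M` is a matching in `G`: a set of edges of `G`, no two of which share a vertex. -/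
def isMatching {V : Type*} (G : SimpleGraph V) (M : Set (Sym2 V)) : Prop :=
  M ⊆ G.edgeSet ∧ ∀ e ∈ M, ∀ f ∈ M, e ≠ f → ∀ v : V, ¬(v ∈ e ∧ v ∈ f)

/-- `p 0, p 1, …, p l` is an `M`-augmenting path of length `l` in `G`:
a path whose endpoints are not covered by `M`, whose edges alternate outside/inside `M`,
beginning and ending with edges outside `M` (so `l` is odd). -/
def isAugPath {V : Type*} (G : SimpleGraph V) (M : Set (Sym2 V)) (p : ℕ → V) (l : ℕ) : Prop :=
  Odd l ∧ (∀ i < l, G.Adj (p i) (p (i+1))) ∧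
  (∀ i ≤ l, ∀ j ≤ l, p i = p j → i = j) ∧
  ¬ coveredBy M (p 0) ∧ ¬ coveredBy M (p l) ∧
  ∀ i < l, (s(p i, p (i+1)) ∈ M ↔ Odd i)

/-- `G` is bipartite: the vertices can be split into a set `A` and its complement so that
every edge has one endpoint in `A` and the other outside `A`. -/
def isBipartite {V : Type*} (G : SimpleGraph V) : Prop :=
  ∃ A : Set V, ∀ v w : V, G.Adj v w → (v ∈ A ↔ w ∉ A)

/-- `N_G(S)`: vertices adjacent in `G` to some vertex of `S`. -/
def NG {V : Type*} (G : SimpleGraph V) (S : Set V) : Set V := {w | ∃ v ∈ S, G.Adj v w}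

/-- `N_M(S)`: vertices joined by an edge of `M` to some vertex of `S`. -/
def NM {V : Type*} (M : Set (Sym2 V)) (S : Set V) : Set V := {w | ∃ v ∈ S, s(v, w) ∈ M}

/-- `Yseq G M S` : `Y_0 = S`, `Y_{2k+1} = N_G(Y_{2k})`, `Y_{2k+2} = N_M(Y_{2k+1})`. -/
def Yseq {V : Type*} (G : SimpleGraph V) (M : Set (Sym2 V)) (S : Set V) : ℕ → Set V
  | 0 => S
  | (l+1) => if Even l then NG G (Yseq G M S l) else NM M (Yseq G M S l)

/-- `Wseq G M x` : `W_0 = {x}`, `W_{2k+1} = N_M(W_{2k})`, `W_{2k+2} = N_G(W_{2k+1})`. -/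
def Wseq {V : Type*} (G : SimpleGraph V) (M : Set (Sym2 V)) (x : V) : ℕ → Set V
  | 0 => {x}
  | (l+1) => if Even l then NM M (Wseq G M x l) else NG G (Wseq G M x l)

/-- The set of edges of the path `p 0, …, p l`. -/
def pathEdges {V : Type*} (p : ℕ → V) (l : ℕ) : Set (Sym2 V) :=
  {e | ∃ i < l, e = s(p i, p (i+1))}

/-!
Write `X_l(S)` for `Yseq G M S l`. A vertex of `X_l(S)` is the end of an alternating walk of
length `l` from `S`. Suppose that a vertex `u` lies in `X_l(v)` and in `X_m(w)`.

If `l + m` is odd, then following the walk from `v` to `u` and then the walk from `w` to `u`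
backwards is again alternating, so `w ∈ X_n(v)` for the odd number `n = l + m`. For the least such
`n` the walk is a path: in a bipartite graph two visits to a repeated vertex have the same parity,
so the part between them can be cut out. This path is augmenting.

If `l` and `m` are even and positive, then the last steps of the two walks use the same edge `yu`
of `M`. As `y` has at most two neighbours, two of the following three coincide: `u` and the
vertices before `y` on the two walks. So two even layers with smaller indices meet, and the descent
ends with `v = w` or with `v` or `w` covered. If `l` and `m` are odd and `u` is a leaf, its only
neighbour reduces this to the even case.
-/

section

variable {V : Type*} {G : SimpleGraph V} {M : Set (Sym2 V)} {S T : Set V}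

theorem isMatching.eq_of_mem (hM : isMatching G M) {x y z : V} (hy : s(x, y) ∈ M)
    (hz : s(x, z) ∈ M) : y = z := by
  by_contra hne
  exact hM.2 _ hy _ hz (fun h => hne (Sym2.congr_right.1 h)) x
    ⟨Sym2.mem_mk_left x y, Sym2.mem_mk_left x z⟩

/-- The relation that leads from the layer `X_l` to the layer `X_{l+1}`, so that `l` is the number
of steps already made: adjacency in `G` for even `l`, an edge of `M` for odd `l`. As in `Yseq`, the
edge of an even step is allowed to be in `M`. -/
def AltStep (G : SimpleGraph V) (M : Set (Sym2 V)) (l : ℕ) (x y : V) : Prop :=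
  if Even l then G.Adj x y else s(x, y) ∈ M

/-- The first `n` steps of the sequence `p` form an alternating walk. Vertices may repeat, and
nothing is required of the values of `p` after `p n`; if `n` is odd, no vertex repeats and the two
ends are uncovered by a matching `M`, then the walk is an augmenting path. -/
def IsAltWalk (G : SimpleGraph V) (M : Set (Sym2 V)) (p : ℕ → V) (n : ℕ) : Prop :=
  ∀ i < n, AltStep G M i (p i) (p (i + 1))

theorem AltStep.symm {l : ℕ} {x y : V} (h : AltStep G M l x y) : AltStep G M l y x := by
  unfold AltStep at *
  split_ifs at * with hl
  · exact h.symm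
  · rwa [Sym2.eq_swap]

theorem AltStep.congr_parity {l m : ℕ} {x y : V} (h : AltStep G M l x y)
    (hlm : Even l ↔ Even m) : AltStep G M m x y := by
  simpa only [AltStep, hlm] using h

theorem AltStep.mem {l : ℕ} {x y : V} (h : AltStep G M l x y) (hl : Odd l) : s(x, y) ∈ M := by
  rwa [AltStep, if_neg (Nat.not_even_iff_odd.2 hl)] at h

theorem AltStep.adj {l : ℕ} {x y : V} (h : AltStep G M l x y) (hM : M ⊆ G.edgeSet) :
    G.Adj x y := by
  unfold AltStep at h
  split_ifs at h
  · exact h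
  · exact hM h

theorem mem_Yseq_succ {l : ℕ} {x : V} :
    x ∈ Yseq G M S (l + 1) ↔ ∃ y ∈ Yseq G M S l, AltStep G M l y x := by
  simp only [AltStep]
  rw [Yseq]
  split_ifs <;> rfl

theorem mem_Yseq_two_mul_succ {l : ℕ} {x : V} :
    x ∈ Yseq G M S (2 * (l + 1)) ↔
      ∃ z ∈ Yseq G M S (2 * l), ∃ y, G.Adj z y ∧ s(y, x) ∈ M := by
  simp only [Nat.mul_succ, mem_Yseq_succ, AltStep, even_two_mul, Nat.not_even_bit1, if_true,
    if_false]
  tauto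

theorem coveredBy_of_mem_Yseq_two_mul_succ {l : ℕ} {x : V}
    (hx : x ∈ Yseq G M S (2 * (l + 1))) : coveredBy M x := by
  obtain ⟨_, _, y, _, hyx⟩ := mem_Yseq_two_mul_succ.1 hx
  exact ⟨_, hyx, Sym2.mem_mk_right y x⟩

theorem exists_isAltWalk_of_mem_Yseq {n : ℕ} {x : V} (hx : x ∈ Yseq G M S n) :
    ∃ p, p 0 ∈ S ∧ p n = x ∧ IsAltWalk G M p n := by
  induction n generalizing x with
  | zero => exact ⟨fun _ => x, hx, rfl, by simp [IsAltWalk]⟩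
  | succ n ih =>
    obtain ⟨y, hy, hyx⟩ := mem_Yseq_succ.1 hx
    obtain ⟨p, hp0, rfl, hp⟩ := ih hy
    refine ⟨Function.update p (n + 1) x, by simpa using hp0, by simp, fun i hi => ?_⟩
    rcases Nat.lt_succ_iff_lt_or_eq.1 hi with hin | rfl
    · simpa [Function.update_of_ne, hin.ne, hi.ne] using hp i hin
    · simpa using hyx

theorem IsAltWalk.mem_Yseq_add {p : ℕ → V} {n i j k : ℕ} (hp : IsAltWalk G M p n)
    (hj : p j ∈ Yseq G M S i) (hij : Even i ↔ Even j) (hk : j + k ≤ n) :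
    p (j + k) ∈ Yseq G M S (i + k) := by
  induction k with
  | zero => exact hj
  | succ k ih =>
    have hparity : Even (j + k) ↔ Even (i + k) := by rw [Nat.even_add, Nat.even_add, hij]
    exact mem_Yseq_succ.2 ⟨p (j + k), ih (by lia), (hp (j + k) (by lia)).congr_parity hparity⟩

theorem Yseq_add_inter_nonempty_of_odd {l m : ℕ} {u : V} (hl : u ∈ Yseq G M S l)
    (hm : u ∈ Yseq G M T m) (hlm : Odd (l + m)) : (Yseq G M S (l + m) ∩ T).Nonempty := by
  induction m generalizing l u with
  | zero => exact ⟨u, hl, hm⟩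
  | succ m ih =>
    obtain ⟨y, hy, hyu⟩ := mem_Yseq_succ.1 hm
    have hparity : Even m ↔ Even l := by grind
    have hyl : y ∈ Yseq G M S (l + 1) :=
      mem_Yseq_succ.2 ⟨u, hl, hyu.symm.congr_parity hparity⟩
    rw [← Nat.succ_add_eq_add_succ] at hlm ⊢
    exact ih hyl hy hlm

theorem even_iff_even_of_isBipartite (hbip : isBipartite G) {p : ℕ → V} {n i j : ℕ}
    (hp : ∀ k < n, G.Adj (p k) (p (k + 1))) (hi : i ≤ n) (hj : j ≤ n) (hij : p i = p j) :
    Even i ↔ Even j := by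
  obtain ⟨A, hA⟩ := hbip
  have hside : ∀ k ≤ n, (p k ∈ A ↔ (Even k ↔ p 0 ∈ A)) := by
    intro k hk
    induction k with
    | zero => simp
    | succ k ih =>
      have hk' := hA _ _ (hp k hk)
      grind
  have hi' := hside i hi
  have hj' := hside j hj
  grind

theorem IsAltWalk.injOn_of_minimal {p : ℕ → V} {n : ℕ} (hp : IsAltWalk G M p n)
    (hM : M ⊆ G.edgeSet) (hbip : isBipartite G) (hn : Odd n) (hp0 : p 0 ∈ S)
    (hmin : ∀ m < n, Odd m → p n ∉ Yseq G M S m) : Set.InjOn p (Set.Iic n) := by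
  have hne : ∀ i j, i < j → j ≤ n → p i ≠ p j := by
    intro i j hij hj hpij
    have hparity : Even i ↔ Even j :=
      even_iff_even_of_isBipartite hbip (fun k hk => (hp k hk).adj hM) (by lia) hj hpij
    have hi : p i ∈ Yseq G M S i := by
      simpa only [zero_add] using hp.mem_Yseq_add (i := 0) hp0 Iff.rfl (k := i) (by lia)
    have hshort : p n ∈ Yseq G M S (i + (n - j)) := by
      simpa only [Nat.add_sub_of_le hj] using
        hp.mem_Yseq_add (hpij ▸ hi) hparity (Nat.add_sub_of_le hj).le
    exact hmin _ (by lia) (by grind) hshort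
  intro i hi j hj hij
  by_contra h
  rcases Nat.lt_or_gt_of_ne h with h | h
  · exact hne i j h hj hij
  · exact hne j i h hi hij.symm

theorem IsAltWalk.isAugPath {p : ℕ → V} {n : ℕ} (hp : IsAltWalk G M p n) (hM : isMatching G M)
    (hn : Odd n) (hinj : Set.InjOn p (Set.Iic n)) (hp0 : ¬ coveredBy M (p 0))
    (hpn : ¬ coveredBy M (p n)) : isAugPath G M p n := by
  refine ⟨hn, fun i hi => (hp i hi).adj hM.1, fun i hi j hj h => hinj hi hj h, hp0, hpn,
    fun i hi => ⟨fun hmem => ?_, (hp i hi).mem⟩⟩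
  rcases i with _ | i
  · exact absurd ⟨_, hmem, Sym2.mem_mk_left _ _⟩ hp0
  · by_contra hodd
    have hprev : s(p (i + 1), p i) ∈ M := (hp i (by lia)).symm.mem (by grind)
    have htwo : i = i + 2 :=
      hinj (show i ≤ n by lia) (show i + 2 ≤ n from hi) (hM.eq_of_mem hprev hmem)
    lia

theorem exists_isAugPath_of_Yseq_inter_nonempty (hM : isMatching G M) (hbip : isBipartite G)
    (hS : ∀ v ∈ S, ¬ coveredBy M v) (hT : ∀ w ∈ T, ¬ coveredBy M w) {n : ℕ} (hn : Odd n)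
    (h : (Yseq G M S n ∩ T).Nonempty) : ∃ p, ∃ l ≤ n, isAugPath G M p l := by
  induction n using Nat.strong_induction_on with
  | _ n ih =>
    by_cases hshort : ∃ m < n, Odd m ∧ (Yseq G M S m ∩ T).Nonempty
    · obtain ⟨m, hmn, hm, hne⟩ := hshort
      obtain ⟨p, l, hl, hp⟩ := ih m hmn hm hne
      exact ⟨p, l, hl.trans hmn.le, hp⟩
    · obtain ⟨w, hw, hwT⟩ := h
      obtain ⟨p, hp0, rfl, hp⟩ := exists_isAltWalk_of_mem_Yseq hw
      have hinj : Set.InjOn p (Set.Iic n) := hp.injOn_of_minimal hM.1 hbip hn hp0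
        fun m hmn hm hmem => hshort ⟨m, hmn, hm, p n, hmem, hwT⟩
      exact ⟨p, n, le_rfl, hp.isAugPath hM hn hinj (hS _ hp0) (hT _ hwT)⟩

theorem eq_or_eq_or_eq_of_encard_le_two {α : Type*} {s : Set α} (hs : s.encard ≤ 2) {a b c : α}
    (ha : a ∈ s) (hb : b ∈ s) (hc : c ∈ s) : a = b ∨ a = c ∨ b = c := by
  by_contra! hne
  have hsub : ({a, b, c} : Set α) ⊆ s := by simp [Set.insert_subset_iff, ha, hb, hc]
  have hthree : ({a, b, c} : Set α).encard = 3 :=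
    Set.encard_eq_three.2 ⟨a, b, c, hne.1, hne.2.1, hne.2.2, rfl⟩
  exact absurd (hthree ▸ (Set.encard_le_encard hsub).trans hs) (by decide)

theorem disjoint_Yseq_two_mul (hM : isMatching G M)
    (hdeg : ∀ v, (G.neighborSet v).encard ≤ 2) (hST : Disjoint S T)
    (hS : ∀ v ∈ S, ¬ coveredBy M v) (hT : ∀ w ∈ T, ¬ coveredBy M w) (l m : ℕ) :
    Disjoint (Yseq G M S (2 * l)) (Yseq G M T (2 * m)) := by
  match l, m with
  | 0, 0 => exact hST
  | 0, m + 1 =>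
    exact Set.disjoint_left.2 fun x hx hxT => hS x hx (coveredBy_of_mem_Yseq_two_mul_succ hxT)
  | l + 1, 0 =>
    exact Set.disjoint_left.2 fun x hxS hx => hT x hx (coveredBy_of_mem_Yseq_two_mul_succ hxS)
  | l + 1, m + 1 =>
    refine Set.disjoint_left.2 fun x hxS hxT => ?_
    obtain ⟨a, ha, y, hay, hyx⟩ := mem_Yseq_two_mul_succ.1 hxS
    obtain ⟨b, hb, y', hby, hyx'⟩ := mem_Yseq_two_mul_succ.1 hxT
    obtain rfl : y = y' := hM.eq_of_mem (Sym2.eq_swap ▸ hyx) (Sym2.eq_swap ▸ hyx')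
    rcases eq_or_eq_or_eq_of_encard_le_two (hdeg y) hay.symm hby.symm (hM.1 hyx) with
      rfl | rfl | rfl
    · exact Set.disjoint_left.1 (disjoint_Yseq_two_mul hM hdeg hST hS hT l m) ha hb
    · exact Set.disjoint_left.1 (disjoint_Yseq_two_mul hM hdeg hST hS hT l (m + 1)) ha hxT
    · exact Set.disjoint_left.1 (disjoint_Yseq_two_mul hM hdeg hST hS hT (l + 1) m) hxS hb
termination_by l + m

theorem exists_isAugPath_of_leaf_mem_Yseq (hM : isMatching G M) (hbip : isBipartite G)
    (hdeg : ∀ v, (G.neighborSet v).encard ≤ 2) (hST : Disjoint S T)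
    (hS : ∀ v ∈ S, ¬ coveredBy M v) (hT : ∀ w ∈ T, ¬ coveredBy M w) {u : V}
    (hu : (G.neighborSet u).encard ≤ 1) {l m : ℕ} (hl : u ∈ Yseq G M S l)
    (hm : u ∈ Yseq G M T m) : ∃ p, ∃ n ≤ l + m, isAugPath G M p n := by
  have heven := disjoint_Yseq_two_mul hM hdeg hST hS hT
  by_cases hlm : Odd (l + m)
  · exact exists_isAugPath_of_Yseq_inter_nonempty hM hbip hS hT hlm
      (Yseq_add_inter_nonempty_of_odd hl hm hlm)
  rw [Nat.not_odd_iff_even] at hlm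
  exfalso
  rcases Nat.even_or_odd' l with ⟨a, rfl | rfl⟩
  · obtain ⟨b, rfl⟩ := even_iff_exists_two_mul.1 (show Even m by grind)
    exact Set.disjoint_left.1 (heven a b) hl hm
  · obtain ⟨b, rfl⟩ : Odd m := by grind
    obtain ⟨x, hx, hxu⟩ := mem_Yseq_succ.1 hl
    obtain ⟨y, hy, hyu⟩ := mem_Yseq_succ.1 hm
    obtain rfl : x = y :=
      Set.encard_le_one_iff.1 hu x y (hxu.adj hM.1).symm (hyu.adj hM.1).symm
    exact Set.disjoint_left.1 (heven a b) hx hy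

theorem stmt7_general (hbip : isBipartite G) (hdeg : ∀ v, (G.neighborSet v).encard ≤ 2)
    (hM : isMatching G M) {K : ℕ} (hnoaug : ∀ p, ∀ l ≤ 2 * K, ¬ isAugPath G M p l)
    {v w : V} (hvw : v ≠ w) (hv : ¬ coveredBy M v) (hw : ¬ coveredBy M w) :
    ¬ ∃ u : V, (G.neighborSet u).encard ≤ 1 ∧
      u ∈ ⋃ l ∈ Finset.range (K + 1), Yseq G M {v} l ∧
      u ∈ ⋃ l ∈ Finset.range (K + 1), Yseq G M {w} l := by
  simp only [Set.mem_iUnion, Finset.mem_range, exists_prop]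
  rintro ⟨u, hu, ⟨l, hl, hul⟩, ⟨m, hm, hum⟩⟩
  obtain ⟨p, n, hn, hp⟩ := exists_isAugPath_of_leaf_mem_Yseq hM hbip hdeg
    (Set.disjoint_singleton.2 hvw) (by simpa using hv) (by simpa using hw) hu hul hum
  exact hnoaug p n (by lia) hp

end

/-- In a finite bipartite graph whose vertices have degree 1 or 2, with matching
`M` having no augmenting paths of length ≤ 2K+1 (K ≥ 2 even), if `v ≠ w` are both uncovered,
then no degree-1 vertex lies both in `⋃_{l=0}^{K} X_l(v)` and in `⋃_{l=0}^{K} X_l(w)`. -/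
theorem stmt7 {V : Type*} [Fintype V] (G : SimpleGraph V) (M : Set (Sym2 V))
    (K : ℕ) (hK2 : 2 ≤ K) (hKeven : Even K)
    (hbip : isBipartite G)
    (hdeg : ∀ v : V, (G.neighborSet v).ncard = 1 ∨ (G.neighborSet v).ncard = 2)
    (hM : isMatching G M)
    (hnoaug : ∀ (p : ℕ → V) (l : ℕ), l ≤ 2 * K + 1 → ¬ isAugPath G M p l)
    (v w : V) (hvw : v ≠ w)
    (hv : ¬ coveredBy M v) (hw : ¬ coveredBy M w) :
    ¬ ∃ u : V, (G.neighborSet u).ncard = 1 ∧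
      u ∈ ⋃ l ∈ Finset.range (K + 1), Yseq G M {v} l ∧
      u ∈ ⋃ l ∈ Finset.range (K + 1), Yseq G M {w} l := by
  rintro ⟨u, hu, huvw⟩
  have hdeg' : ∀ x, (G.neighborSet x).encard ≤ 2 := fun x =>
    Set.encard_le_coe_iff_finite_ncard_le.2 ⟨Set.toFinite _, (hdeg x).elim (by lia) Eq.le⟩
  have hu' : (G.neighborSet u).encard ≤ 1 :=
    Set.encard_le_coe_iff_finite_ncard_le.2 ⟨Set.toFinite _, hu.le⟩
  exact stmt7_general hbip hdeg' hM (fun p l hl => hnoaug p l (by lia)) hvw hv hw ⟨u, hu', huvw⟩
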